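/- Let u ≥ 1, ε > 0, and let m : ℕ → ℂ satisfy ‖m‖_{V_u} ≤ 1. Then there exist δ > 0 and C > 0 depending only on u and ε, complex coefficients (c_j)_{j≥0} with |c_j| ≤ C · 2^{−jδ}, and sequences m_j ∈ r_{u+ε}, such that m(n) = Σ_{j=0}^∞ c_j m_j(n) for every n ∈ ℕ. In particular, Σ_{j=0}^∞ |c_j|^σ < ∞ for every σ > 0. -/

import Mathlib

/-!
For `n : ℕ` let `v n` be the supremum of `Σ |m (j_i) - m (j_{i-1})| ^ u` over strings ending at `n`.
Appending a point to a string shows `v a + |m b - m a| ^ u ≤ v b` for `a < b`, so `v` is monotone,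
takes values in `[0, 1]`, and `m` is `1/u`-Hölder with respect to `v`. Cutting `[0, 1]` dyadically
at scale `2 ^ (-j)` therefore cuts `ℕ` into at most `2 ^ j + 1` intervals on each of which `m`
oscillates by at most `2 ^ (-j/u)`. Replacing `m` on each interval by one of its values gives step
functions converging to `m`, and the difference of two consecutive ones takes `O(2 ^ j)` values of
size `O(2 ^ (-j/u))`. Its norm in `r_p` is thus `O(2 ^ (j/p - j/u))`, which decays geometrically
for `p > u`.
-/

open scoped ENNReal

/-- The `u`-variation `𝒱_u(m)` of a sequence `m : ℕ → ℂ`, as a value in `[0,∞]`. -/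
noncomputable def eVar (u : ℝ) (m : ℕ → ℂ) : ℝ≥0∞ :=
  ⨆ (N : ℕ) (j : Fin (N + 1) → ℕ) (_ : StrictMono j),
    (∑ i : Fin N, (ENNReal.ofReal ‖m (j i.succ) - m (j i.castSucc)‖) ^ u) ^ (1 / u)

/-- The `V_u` norm `‖m‖_{V_u} = sup_j |m j| + 𝒱_u(m)`, as a value in `[0,∞]`. -/
noncomputable def eVnorm (u : ℝ) (m : ℕ → ℂ) : ℝ≥0∞ :=
  (⨆ j : ℕ, ENNReal.ofReal ‖m j‖) + eVar u m

/-- `g ∈ r_u`: `g = Σ_ν a_ν 1_{I_ν}` for a countable family of pairwise disjoint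
order-convex subsets (intervals) `I_ν` of `ℕ` and coefficients with
`(Σ_ν |a_ν|^u)^(1/u) ≤ 1`. -/
def memru (u : ℝ) (g : ℕ → ℂ) : Prop :=
  ∃ (I : ℕ → Set ℕ) (a : ℕ → ℂ),
    (∀ ν, (I ν).OrdConnected) ∧ Pairwise (Function.onFun Disjoint I) ∧
    Summable (fun ν => ‖a ν‖ ^ u) ∧ (∑' ν : ℕ, ‖a ν‖ ^ u) ^ (1 / u) ≤ 1 ∧
    ∀ n, g n = ∑' ν : ℕ, (I ν).indicator (fun _ => a ν) n

open Filter Topology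
open scoped NNReal

section Variation

variable {α X : Type*}

/-- The sum of the `u`-th powers of the jumps of `m` along the string `p`; strings
`j_0 < j_1 < ⋯ < j_N` are encoded as Mathlib's `LTSeries`. -/
noncomputable def jumpSum [Preorder α] [PseudoEMetricSpace X] (u : ℝ) (m : α → X)
    (p : LTSeries α) : ℝ≥0∞ :=
  ∑ i : Fin p.length, edist (m (p i.succ)) (m (p i.castSucc)) ^ u

/-- The `u`-th power of the `u`-variation of `m` on `(-∞, n]`, as a supremum over the strings that
end exactly at `n`. -/
noncomputable def variationUpTo [Preorder α] [PseudoEMetricSpace X] (u : ℝ) (m : α → X)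
    (n : α) : ℝ≥0∞ :=
  ⨆ (p : LTSeries α) (_ : p.last = n), jumpSum u m p

theorem jumpSum_snoc [Preorder α] [PseudoEMetricSpace X] (u : ℝ) (m : α → X) (p : LTSeries α)
    {b : α} (hb : p.last < b) :
    jumpSum u m (p.snoc b hb) = jumpSum u m p + edist (m b) (m p.last) ^ u := by
  let jump (x y : α) : ℝ≥0∞ := edist (m x) (m y) ^ u
  have hinit (i : Fin p.length) :
      jump (p.snoc b hb i.castSucc.succ) (p.snoc b hb i.castSucc.castSucc) =
        jump (p i.succ) (p i.castSucc) :=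
    congrArg₂ jump (p.snoc_castSucc b hb i.succ) (p.snoc_castSucc b hb i.castSucc)
  have hlast : jump (p.snoc b hb (Fin.last p.length).succ)
      (p.snoc b hb (Fin.last p.length).castSucc) = jump b p.last :=
    congrArg₂ jump (p.last_snoc' b hb) (p.snoc_castSucc b hb (Fin.last p.length))
  exact (Fin.sum_univ_castSucc (n := p.length) _).trans
    (congrArg₂ (· + ·) (Finset.sum_congr rfl fun i _ => hinit i) hlast)

theorem variationUpTo_add_edist_rpow_le [Preorder α] [PseudoEMetricSpace X] (u : ℝ) (m : α → X)
    {a b : α} (hab : a < b) :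
    variationUpTo u m a + edist (m b) (m a) ^ u ≤ variationUpTo u m b := by
  rw [variationUpTo, ENNReal.biSup_add' ⟨RelSeries.singleton _ a, RelSeries.last_singleton a⟩]
  refine iSup₂_le fun p hp => ?_
  subst hp
  rw [← jumpSum_snoc u m p hab]
  exact le_iSup₂_of_le (p.snoc b hab) (RelSeries.last_snoc p b hab) le_rfl

theorem monotone_variationUpTo [PartialOrder α] [PseudoEMetricSpace X] (u : ℝ) (m : α → X) :
    Monotone (variationUpTo u m) :=
  monotone_iff_forall_lt.2 fun _ _ hab =>
    le_self_add.trans (variationUpTo_add_edist_rpow_le u m hab)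

theorem dist_rpow_le_dist_variationUpTo [LinearOrder α] [PseudoMetricSpace X] {u : ℝ} (hu : 0 < u)
    {m : α → X} (hfin : ∀ n, variationUpTo u m n ≠ ∞) (a b : α) :
    dist (m a) (m b) ^ u ≤
      dist (variationUpTo u m a).toNNReal (variationUpTo u m b).toNNReal := by
  wlog hab : a < b generalizing a b
  · rcases (not_lt.1 hab).eq_or_lt with rfl | hba
    · simp [Real.zero_rpow hu.ne']
    · simpa only [dist_comm] using this b a hba
  have hadd : (variationUpTo u m a).toReal + dist (m b) (m a) ^ u ≤
      (variationUpTo u m b).toReal := by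
    have h := ENNReal.toReal_mono (hfin b) (variationUpTo_add_edist_rpow_le u m hab)
    rwa [ENNReal.toReal_add (hfin a) (ENNReal.rpow_ne_top_of_nonneg hu.le (edist_ne_top _ _)),
      ← ENNReal.toReal_rpow, ← dist_edist] at h
  rw [dist_comm, dist_comm (ENNReal.toNNReal _), NNReal.dist_eq]
  exact (le_sub_iff_add_le'.2 hadd).trans (le_abs_self _)

theorem jumpSum_le_eVar_rpow {u : ℝ} (hu : 0 < u) (m : ℕ → ℂ) (p : LTSeries ℕ) :
    jumpSum u m p ≤ eVar u m ^ u := by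
  rw [← ENNReal.rpow_inv_le_iff hu, ← one_div]
  refine le_iSup_of_le p.length (le_iSup_of_le p.toFun (le_iSup_of_le p.strictMono ?_))
  simp only [jumpSum, edist_eq_enorm_sub, ofReal_norm]
  rfl

theorem variationUpTo_le_eVar_rpow {u : ℝ} (hu : 0 < u) (m : ℕ → ℂ) (n : ℕ) :
    variationUpTo u m n ≤ eVar u m ^ u :=
  iSup₂_le fun p _ => jumpSum_le_eVar_rpow hu m p

theorem norm_le_one_of_eVnorm_le_one {u : ℝ} {m : ℕ → ℂ} (hm : eVnorm u m ≤ 1) (n : ℕ) :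
    ‖m n‖ ≤ 1 :=
  ENNReal.ofReal_le_one.1 <|
    (le_iSup (fun j => ENNReal.ofReal ‖m j‖) n).trans (le_self_add.trans hm)

theorem exists_monotone_dist_rpow_le_dist {u : ℝ} (hu : 0 < u) {m : ℕ → ℂ} (hm : eVar u m ≤ 1) :
    ∃ v : ℕ → ℝ≥0, Monotone v ∧ (∀ n, v n ≤ 1) ∧
      ∀ a b, dist (m a) (m b) ^ u ≤ dist (v a) (v b) := by
  have hle : ∀ n, variationUpTo u m n ≤ 1 := fun n =>
    (variationUpTo_le_eVar_rpow hu m n).trans (ENNReal.rpow_le_one hm hu.le)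
  have hfin : ∀ n, variationUpTo u m n ≠ ∞ := fun n =>
    ne_top_of_le_ne_top ENNReal.one_ne_top (hle n)
  refine ⟨fun n => (variationUpTo u m n).toNNReal, fun a b hab => ?_, fun n => ?_,
    dist_rpow_le_dist_variationUpTo hu hfin⟩
  · exact ENNReal.toNNReal_mono (hfin b) (monotone_variationUpTo u m hab)
  · exact ENNReal.toNNReal_mono ENNReal.one_ne_top (hle n)

end Variation

theorem memru_comp_of_monotone {p : ℝ} (hp : 0 ≤ p) {h : ℕ → ℂ} {f : ℕ → ℕ} (hf : Monotone f)
    (hsum : Summable fun ν => ‖h ν‖ ^ p) (hle : ∑' ν, ‖h ν‖ ^ p ≤ 1) : memru p (h ∘ f) := by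
  refine ⟨fun ν => f ⁻¹' {ν}, h, fun ν => Set.ordConnected_singleton.preimage_mono hf,
    fun _ _ hne => Disjoint.preimage f (Set.disjoint_singleton.2 hne), hsum,
    Real.rpow_le_one (tsum_nonneg fun _ => by positivity) hle (by positivity), fun n => ?_⟩
  have hother : ∀ ν ≠ f n, (f ⁻¹' {ν}).indicator (fun _ => h ν) n = 0 := fun ν hν =>
    Set.indicator_of_notMem (Ne.symm hν) _
  exact ((tsum_eq_single (f n) hother).trans (Set.indicator_of_mem rfl _)).symm

theorem memru_of_factorsThrough {p b : ℝ} (hp : 0 < p) (hb : 0 ≤ b) {g : ℕ → ℂ} {f : ℕ → ℕ} {L : ℕ}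
    (hf : Monotone f) (hL : ∀ n, f n < L) (hgf : g.FactorsThrough f) (hgb : ∀ n, ‖g n‖ ≤ b)
    (hLb : L * b ^ p ≤ 1) : memru p g := by
  let h : ℕ → ℂ := Function.extend f g 0
  have hfg : h ∘ f = g := funext (hgf.extend_apply 0)
  have hbound : ∀ ν, ‖h ν‖ ≤ b := by
    intro ν
    by_cases hν : ∃ n, f n = ν
    · obtain ⟨n, rfl⟩ := hν
      exact (congrArg norm (congrFun hfg n)).trans_le (hgb n)
    · simpa [h, Function.extend_apply' _ _ _ hν] using hb
  have hsupp : ∀ ν ∉ Finset.range L, ‖h ν‖ ^ p = 0 := by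
    intro ν hν
    have hrange : ¬ ∃ n, f n = ν := by
      rintro ⟨n, rfl⟩
      exact hν (Finset.mem_range.2 (hL n))
    simp [h, Function.extend_apply' _ _ _ hrange, Real.zero_rpow hp.ne']
  rw [← hfg]
  refine memru_comp_of_monotone hp.le hf (summable_of_ne_finset_zero hsupp) ?_
  calc ∑' ν, ‖h ν‖ ^ p = ∑ ν ∈ Finset.range L, ‖h ν‖ ^ p := tsum_eq_sum hsupp
    _ ≤ ∑ _ν ∈ Finset.range L, b ^ p :=
        Finset.sum_le_sum fun ν _ => Real.rpow_le_rpow (norm_nonneg _) (hbound ν) hp.le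
    _ = L * b ^ p := by rw [Finset.sum_const, Finset.card_range, nsmul_eq_mul]
    _ ≤ 1 := hLb

theorem summable_rpow_neg_natCast_mul {b s : ℝ} (hb : 1 < b) (hs : 0 < s) :
    Summable fun j : ℕ => b ^ (-(j : ℝ) * s) := by
  have hgeom : ∀ j : ℕ, b ^ (-(j : ℝ) * s) = (b ^ (-s)) ^ j := fun j => by
    rw [← Real.rpow_mul_natCast (by positivity)]
    ring_nf
  simp only [hgeom]
  exact summable_geometric_of_lt_one (by positivity)
    (Real.rpow_lt_one_of_one_lt_of_neg hb (neg_neg_of_pos hs))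

theorem summable_mul_rpow_neg_natCast_mul_rpow {C b δ σ : ℝ} (hC : 0 ≤ C) (hb : 1 < b)
    (hδ : 0 < δ) (hσ : 0 < σ) : Summable fun j : ℕ => (C * b ^ (-(j : ℝ) * δ)) ^ σ := by
  have hpow : ∀ j : ℕ, (C * b ^ (-(j : ℝ) * δ)) ^ σ = C ^ σ * b ^ (-(j : ℝ) * (δ * σ)) := by
    intro j
    rw [Real.mul_rpow hC (by positivity), ← Real.rpow_mul (by positivity), mul_assoc]
  simp only [hpow]
  exact (summable_rpow_neg_natCast_mul hb (mul_pos hδ hσ)).mul_left _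

section Dyadic

variable {α X E : Type*}

/-- The index of the dyadic interval of length `2 ^ (-j)` that contains `v n`. -/
noncomputable def dyadicLevel (v : α → ℝ≥0) (j : ℕ) (n : α) : ℕ := ⌊2 ^ j * v n⌋₊

/-- The step function that takes on each level set of `dyadicLevel v j` the value of `m` at a
representative of that set; `Function.invFun` makes the choice depend on the level only. -/
noncomputable def dyadicApprox [Nonempty α] (m : α → X) (v : α → ℝ≥0) (j : ℕ) (n : α) : X :=
  m (Function.invFun (dyadicLevel v j) (dyadicLevel v j n))

/-- The increments of `dyadicApprox` from one scale to the next, starting from the approximation at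
scale `1`. -/
noncomputable def dyadicDiff [Nonempty α] [SeminormedAddCommGroup E] (m : α → E) (v : α → ℝ≥0) :
    ℕ → α → E
  | 0 => dyadicApprox m v 0
  | j + 1 => dyadicApprox m v (j + 1) - dyadicApprox m v j

theorem monotone_dyadicLevel [Preorder α] {v : α → ℝ≥0} (hv : Monotone v) (j : ℕ) :
    Monotone (dyadicLevel v j) :=
  fun _ _ hab => Nat.floor_mono (mul_le_mul_right (hv hab) _)

theorem dyadicLevel_lt {v : α → ℝ≥0} {n : α} (hv : v n ≤ 1) (j : ℕ) :
    dyadicLevel v j n < 2 ^ j + 1 := by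
  refine Nat.lt_succ_of_le (Nat.floor_le_of_le ?_)
  push_cast
  exact mul_le_of_le_one_right' hv

theorem dyadicLevel_succ_div_two (v : α → ℝ≥0) (j : ℕ) (n : α) :
    dyadicLevel v (j + 1) n / 2 = dyadicLevel v j n := by
  rw [dyadicLevel, ← Nat.floor_div_ofNat, pow_succ, mul_right_comm,
    mul_div_cancel_right₀ _ two_ne_zero, dyadicLevel]

theorem dyadicLevel_eq_of_succ {v : α → ℝ≥0} {j : ℕ} {a b : α}
    (h : dyadicLevel v (j + 1) a = dyadicLevel v (j + 1) b) :
    dyadicLevel v j a = dyadicLevel v j b := by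
  rw [← dyadicLevel_succ_div_two, h, dyadicLevel_succ_div_two]

theorem dist_lt_one_of_natFloor_eq {x y : ℝ≥0} (h : ⌊x⌋₊ = ⌊y⌋₊) : dist x y < 1 := by
  have hx : (⌊y⌋₊ : ℝ) ≤ x ∧ (x : ℝ) < ⌊y⌋₊ + 1 := by
    rw [← h]
    exact_mod_cast And.intro (Nat.floor_le zero_le) (Nat.lt_floor_add_one x)
  have hy : (⌊y⌋₊ : ℝ) ≤ y ∧ (y : ℝ) < ⌊y⌋₊ + 1 := by
    exact_mod_cast And.intro (Nat.floor_le zero_le) (Nat.lt_floor_add_one y)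
  rw [NNReal.dist_eq, abs_lt]
  constructor <;> linarith

theorem dist_le_of_dyadicLevel_eq {v : α → ℝ≥0} {j : ℕ} {a b : α}
    (h : dyadicLevel v j a = dyadicLevel v j b) : dist (v a) (v b) ≤ 2 ^ (-(j : ℝ)) := by
  have hlt := dist_lt_one_of_natFloor_eq h
  rw [NNReal.dist_eq, NNReal.coe_mul, NNReal.coe_mul, NNReal.coe_pow, NNReal.coe_ofNat, ← mul_sub,
    abs_mul, abs_of_pos (by positivity)] at hlt
  rw [NNReal.dist_eq, Real.rpow_neg zero_le_two, Real.rpow_natCast, ← one_div,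
    le_div_iff₀' (by positivity)]
  exact hlt.le

theorem dist_le_of_dist_rpow_le_of_dyadicLevel_eq [PseudoMetricSpace X] {u : ℝ} (hu : 0 < u)
    {m : α → X} {v : α → ℝ≥0} (hv : ∀ a b, dist (m a) (m b) ^ u ≤ dist (v a) (v b)) {j : ℕ}
    {a b : α} (h : dyadicLevel v j a = dyadicLevel v j b) :
    dist (m a) (m b) ≤ 2 ^ (-(j : ℝ) / u) := by
  rw [← Real.rpow_le_rpow_iff dist_nonneg (by positivity) hu, ← Real.rpow_mul zero_le_two,
    div_mul_cancel₀ _ hu.ne']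
  exact (hv a b).trans (dist_le_of_dyadicLevel_eq h)

variable [Nonempty α]

theorem dyadicLevel_invFun (v : α → ℝ≥0) (j : ℕ) (n : α) :
    dyadicLevel v j (Function.invFun (dyadicLevel v j) (dyadicLevel v j n)) = dyadicLevel v j n :=
  Function.invFun_eq ⟨n, rfl⟩

theorem dyadicApprox_factorsThrough (m : α → X) (v : α → ℝ≥0) (j : ℕ) :
    (dyadicApprox m v j).FactorsThrough (dyadicLevel v j) :=
  fun _ _ h => by rw [dyadicApprox, h, dyadicApprox]

theorem tendsto_dyadicApprox [PseudoMetricSpace X] {u : ℝ} (hu : 0 < u) {m : α → X} {v : α → ℝ≥0}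
    (hv : ∀ a b, dist (m a) (m b) ^ u ≤ dist (v a) (v b)) (n : α) :
    Tendsto (fun j => dyadicApprox m v j n) atTop (𝓝 (m n)) := by
  have hzero : Tendsto (fun j : ℕ => (2 : ℝ) ^ (-(j : ℝ) / u)) atTop (𝓝 0) := by
    simpa only [div_eq_mul_inv] using
      (summable_rpow_neg_natCast_mul one_lt_two (inv_pos.2 hu)).tendsto_atTop_zero
  exact tendsto_iff_dist_tendsto_zero.2 <| squeeze_zero (fun _ => dist_nonneg)
    (fun j => dist_le_of_dist_rpow_le_of_dyadicLevel_eq hu hv (dyadicLevel_invFun v j n)) hzero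

variable [SeminormedAddCommGroup E]

theorem dyadicDiff_factorsThrough (m : α → E) (v : α → ℝ≥0) (j : ℕ) :
    (dyadicDiff m v j).FactorsThrough (dyadicLevel v j) := by
  cases j with
  | zero => exact dyadicApprox_factorsThrough m v 0
  | succ j =>
    exact fun a b h => congrArg₂ (· - ·) (dyadicApprox_factorsThrough m v (j + 1) h)
      (dyadicApprox_factorsThrough m v j (dyadicLevel_eq_of_succ h))

theorem sum_range_succ_dyadicDiff (m : α → E) (v : α → ℝ≥0) (k : ℕ) (n : α) :
    ∑ j ∈ Finset.range (k + 1), dyadicDiff m v j n = dyadicApprox m v k n := by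
  induction k with
  | zero => simp [dyadicDiff]
  | succ k ih => rw [Finset.sum_range_succ, ih, dyadicDiff, Pi.sub_apply, add_sub_cancel]

theorem norm_dyadicDiff_le {u : ℝ} (hu : 0 < u) {m : α → E} {v : α → ℝ≥0} (hm : ∀ n, ‖m n‖ ≤ 1)
    (hv : ∀ a b, dist (m a) (m b) ^ u ≤ dist (v a) (v b)) (j : ℕ) (n : α) :
    ‖dyadicDiff m v j n‖ ≤ 2 ^ ((1 - (j : ℝ)) / u) := by
  cases j with
  | zero => exact (hm _).trans (Real.one_le_rpow one_le_two (by simp [hu.le]))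
  | succ j =>
    have hlevel := (dyadicLevel_eq_of_succ (dyadicLevel_invFun v (j + 1) n)).trans
      (dyadicLevel_invFun v j n).symm
    rw [show (1 - ((j + 1 : ℕ) : ℝ)) = -j by push_cast; ring]
    exact (dist_eq_norm _ _).symm.trans_le (dist_le_of_dist_rpow_le_of_dyadicLevel_eq hu hv hlevel)

theorem hasSum_dyadicDiff {u : ℝ} (hu : 0 < u) {m : α → E} {v : α → ℝ≥0} (hm : ∀ n, ‖m n‖ ≤ 1)
    (hv : ∀ a b, dist (m a) (m b) ^ u ≤ dist (v a) (v b)) (n : α) :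
    HasSum (fun j => dyadicDiff m v j n) (m n) := by
  have hgeom : Summable fun j : ℕ => (2 : ℝ) ^ ((1 - (j : ℝ)) / u) := by
    simpa only [sub_eq_add_neg, add_div, Real.rpow_add two_pos, mul_one_div] using
      (summable_rpow_neg_natCast_mul one_lt_two (one_div_pos.2 hu)).mul_left ((2 : ℝ) ^ (1 / u))
  have hsum : Summable fun j => ‖dyadicDiff m v j n‖ :=
    hgeom.of_nonneg_of_le (fun _ => norm_nonneg _) fun j => norm_dyadicDiff_le hu hm hv j n
  rw [hasSum_iff_tendsto_nat_of_summable_norm hsum, ← tendsto_add_atTop_iff_nat 1]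
  simpa only [sum_range_succ_dyadicDiff] using tendsto_dyadicApprox hu hv n

end Dyadic

/-- A bound for the `r_p` norm of the `j`-th dyadic difference: at most `2 ^ (j + 1)` values, each
of size at most `2 ^ ((1 - j) / u)`, give `2 ^ ((1 - j) / u + (j + 1) / p)`, written here as a
constant times a power of `2 ^ (-j)`. -/
noncomputable def dyadicCoeff (u p : ℝ) (j : ℕ) : ℝ :=
  2 ^ (1 / u + 1 / p) * 2 ^ (-(j : ℝ) * (1 / u - 1 / p))

theorem dyadicCoeff_pos (u p : ℝ) (j : ℕ) : 0 < dyadicCoeff u p j := by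
  unfold dyadicCoeff
  positivity

theorem two_rpow_div_dyadicCoeff (u p : ℝ) (j : ℕ) :
    2 ^ ((1 - (j : ℝ)) / u) / dyadicCoeff u p j = 2 ^ (-((j : ℝ) + 1) / p) := by
  rw [dyadicCoeff, ← Real.rpow_add two_pos, ← Real.rpow_sub two_pos]
  ring_nf

theorem memru_dyadicDiff_div {u p : ℝ} (hu : 0 < u) (hp : 0 < p) {m : ℕ → ℂ} {v : ℕ → ℝ≥0}
    (hm : ∀ n, ‖m n‖ ≤ 1) (hmono : Monotone v) (hv1 : ∀ n, v n ≤ 1)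
    (hv : ∀ a b, dist (m a) (m b) ^ u ≤ dist (v a) (v b)) (j : ℕ) :
    memru p fun n => dyadicDiff m v j n / dyadicCoeff u p j := by
  refine memru_of_factorsThrough hp (b := 2 ^ (-((j : ℝ) + 1) / p)) (by positivity)
    (monotone_dyadicLevel hmono j) (fun n => dyadicLevel_lt (hv1 n) j)
    (fun a b h => congrArg (· / _) (dyadicDiff_factorsThrough m v j h)) (fun n => ?_) ?_
  · rw [norm_div, Complex.norm_of_nonneg (dyadicCoeff_pos u p j).le, ← two_rpow_div_dyadicCoeff]
    exact div_le_div_of_nonneg_right (norm_dyadicDiff_le hu hm hv j n) (dyadicCoeff_pos u p j).le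
  · have hcount : (2 : ℝ) ^ j + 1 ≤ 2 ^ (j + 1) := by
      linarith [pow_succ (2 : ℝ) j, one_le_pow₀ (M₀ := ℝ) one_le_two (n := j)]
    rw [← Real.rpow_mul zero_le_two, div_mul_cancel₀ _ hp.ne', Real.rpow_neg zero_le_two,
      ← div_eq_mul_inv, div_le_one (by positivity)]
    exact_mod_cast hcount

theorem haar_stmt12_general (u ε : ℝ) (hu : 0 < u) (hε : 0 < ε) :
    ∃ δ : ℝ, 0 < δ ∧ ∃ C : ℝ, 0 < C ∧
      ∀ m : ℕ → ℂ, eVnorm u m ≤ 1 →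
        ∃ (c : ℕ → ℂ) (g : ℕ → ℕ → ℂ),
          (∀ j : ℕ, ‖c j‖ ≤ C * (2:ℝ) ^ (-(j : ℝ) * δ)) ∧
          (∀ j : ℕ, memru (u + ε) (g j)) ∧
          (∀ n : ℕ, HasSum (fun j => c j * g j n) (m n)) ∧
          (∀ σ : ℝ, 0 < σ → Summable fun j => ‖c j‖ ^ σ) := by
  have hp : 0 < u + ε := by positivity
  have hδ : 0 < 1 / u - 1 / (u + ε) :=
    sub_pos.2 (one_div_lt_one_div_of_lt hu (lt_add_of_pos_right u hε))
  have hC : 0 < (2 : ℝ) ^ (1 / u + 1 / (u + ε)) := by positivity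
  refine ⟨_, hδ, _, hC, fun m hm => ?_⟩
  have hm1 := norm_le_one_of_eVnorm_le_one hm
  obtain ⟨v, hmono, hv1, hv⟩ := exists_monotone_dist_rpow_le_dist hu (le_add_self.trans hm)
  have hnorm : ∀ j, ‖(dyadicCoeff u (u + ε) j : ℂ)‖ = dyadicCoeff u (u + ε) j := fun j =>
    Complex.norm_of_nonneg (dyadicCoeff_pos u (u + ε) j).le
  have hne : ∀ j, (dyadicCoeff u (u + ε) j : ℂ) ≠ 0 := fun j =>
    Complex.ofReal_ne_zero.2 (dyadicCoeff_pos u (u + ε) j).ne'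
  refine ⟨fun j => dyadicCoeff u (u + ε) j, fun j n => dyadicDiff m v j n / dyadicCoeff u (u + ε) j,
    fun j => (hnorm j).le, memru_dyadicDiff_div hu hp hm1 hmono hv1 hv, fun n => ?_, fun σ hσ => ?_⟩
  · simpa only [mul_div_cancel₀ _ (hne _)] using hasSum_dyadicDiff hu hm1 hv n
  · simp only [hnorm]
    exact summable_mul_rpow_neg_natCast_mul_rpow hC.le one_lt_two hδ hσ

/-- Let `u ≥ 1`, `ε > 0` and `m : ℕ → ℂ` with `‖m‖_{V_u} ≤ 1`. Then there exist
`δ > 0` and `C > 0` depending only on `u` and `ε`, coefficients `(c j)` with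
`|c j| ≤ C · 2^{-jδ}`, and sequences `m_j ∈ r_{u+ε}`, with
`m n = Σ_{j=0}^∞ c_j m_j(n)` for every `n`; in particular
`Σ_j |c_j|^σ < ∞` for every `σ > 0`. -/
theorem haar_stmt12 (u ε : ℝ) (hu : 1 ≤ u) (hε : 0 < ε) :
    ∃ δ : ℝ, 0 < δ ∧ ∃ C : ℝ, 0 < C ∧
      ∀ m : ℕ → ℂ, eVnorm u m ≤ 1 →
        ∃ (c : ℕ → ℂ) (g : ℕ → ℕ → ℂ),
          (∀ j : ℕ, ‖c j‖ ≤ C * (2:ℝ) ^ (-(j : ℝ) * δ)) ∧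
          (∀ j : ℕ, memru (u + ε) (g j)) ∧
          (∀ n : ℕ, HasSum (fun j => c j * g j n) (m n)) ∧
          (∀ σ : ℝ, 0 < σ → Summable fun j => ‖c j‖ ^ σ) :=
  haar_stmt12_general u ε (zero_lt_one.trans_le hu) hε
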